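/- arXiv:math/0304045 — 4 statements merged into one kernel-verified Lean document; each statement's English description precedes it below -/
import Mathlib

section
/- Let T be a bounded linear operator on a complex Hilbert space K such that ⋂_{n≥0} Tⁿ(K) = {0}. Then for every nonzero x ∈ K, the closed disc {λ ∈ ℂ : |λ| ≤ r₁(T)} is contained in the local spectrum σ_T(x). -/
open Filter Topology ENNReal

noncomputable section

/-- The local resolvent set of `T` at `x`. -/
def localResolventSet {E : Type*} [NormedAddCommGroup E] [NormedSpace ℂ E]
    (T : E →L[ℂ] E) (x : E) : Set ℂ :=
  {l : ℂ | ∃ U : Set ℂ, IsOpen U ∧ l ∈ U ∧ ∃ f : ℂ → E, AnalyticOnNhd ℂ f U ∧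
    ∀ m ∈ U, T (f m) - m • f m = x}

/-- The local spectrum of `T` at `x`. -/
def localSpectrum {E : Type*} [NormedAddCommGroup E] [NormedSpace ℂ E]
    (T : E →L[ℂ] E) (x : E) : Set ℂ :=
  (localResolventSet T x)ᶜ

/-- The local spectral radius of `T` at `x`: `limsup ‖Tⁿx‖^{1/n}`. -/
def localSpecRad {E : Type*} [NormedAddCommGroup E] [NormedSpace ℂ E]
    (T : E →L[ℂ] E) (x : E) : ℝ≥0∞ :=
  limsup (fun n : ℕ => (‖(T ^ n) x‖₊ : ℝ≥0∞) ^ (1 / n : ℝ)) atTop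

/-- The lower bound `m(T) = inf {‖Tx‖ : ‖x‖ = 1}` of an operator. -/
def lowerBound {E : Type*} [NormedAddCommGroup E] [NormedSpace ℂ E]
    (T : E →L[ℂ] E) : ℝ :=
  sInf ((fun x => ‖T x‖) '' {x : E | ‖x‖ = 1})

/-- `r₁(T) = lim m(Tⁿ)^{1/n} = sup_{n ≥ 1} m(Tⁿ)^{1/n}`. -/
def r1 {E : Type*} [NormedAddCommGroup E] [NormedSpace ℂ E]
    (T : E →L[ℂ] E) : ℝ≥0∞ :=
  ⨆ n : ℕ, ENNReal.ofReal (lowerBound (T ^ (n + 1))) ^ (1 / (n + 1) : ℝ)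

/-- The point spectrum: the set of eigenvalues. -/
def pointSpectrum {E : Type*} [NormedAddCommGroup E] [NormedSpace ℂ E]
    (T : E →L[ℂ] E) : Set ℂ :=
  {l : ℂ | ∃ x : E, x ≠ 0 ∧ T x = l • x}

/-- The set of points where `T` fails the single-valued extension property. -/
def svepFails {E : Type*} [NormedAddCommGroup E] [NormedSpace ℂ E]
    (T : E →L[ℂ] E) : Set ℂ :=
  {l₀ : ℂ | ¬ ∀ r : ℝ, 0 < r → ∀ f : ℂ → E, AnalyticOnNhd ℂ f (Metric.ball l₀ r) →
      (∀ m ∈ Metric.ball l₀ r, T (f m) - m • f m = 0) →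
      ∀ m ∈ Metric.ball l₀ r, f m = 0}

/-- Dunford's condition (C). -/
def DunfordC {E : Type*} [NormedAddCommGroup E] [NormedSpace ℂ E]
    (T : E →L[ℂ] E) : Prop :=
  ∀ F : Set ℂ, IsClosed F → IsClosed {y : E | localSpectrum T y ⊆ F}

/-- Bishop's property (β). -/
def BishopBeta {E : Type*} [NormedAddCommGroup E] [NormedSpace ℂ E]
    (T : E →L[ℂ] E) : Prop :=
  ∀ U : Set ℂ, IsOpen U → ∀ f : ℕ → ℂ → E,
    (∀ m, AnalyticOnNhd ℂ (f m) U) →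
    TendstoLocallyUniformlyOn (fun m z => T (f m z) - z • f m z) 0 atTop U →
    TendstoLocallyUniformlyOn f 0 atTop U

section Shift

variable {H : Type*} [NormedAddCommGroup H] [InnerProductSpace ℂ H] [CompleteSpace H]

/-- `wB A n = B_n = A_{n-1} ⋯ A_1 A_0`, with `B_0 = 1`. -/
def wB (A : ℕ → (H →L[ℂ] H)ˣ) : ℕ → (H →L[ℂ] H)ˣ
  | 0 => 1
  | n + 1 => A n * wB A n

/-- `wBi A n = B_n⁻¹` as an operator. -/
def wBi (A : ℕ → (H →L[ℂ] H)ˣ) (n : ℕ) : H →L[ℂ] H :=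
  (((wB A n)⁻¹ : (H →L[ℂ] H)ˣ) : H →L[ℂ] H)

/-- `R₂⁺(S_u) = sup_{x ≠ 0} 1 / limsup ‖(B_n*)⁻¹ x‖^{1/n}` (with `1/0 = ∞`). -/
def R2plus (A : ℕ → (H →L[ℂ] H)ˣ) : ℝ≥0∞ :=
  ⨆ (x : H) (_ : x ≠ 0),
    (limsup (fun n : ℕ =>
      (‖ContinuousLinearMap.adjoint (wBi A n) x‖₊ : ℝ≥0∞) ^ (1 / n : ℝ)) atTop)⁻¹

/-- `R₂⁻(S_u) = inf_{x ≠ 0} 1 / limsup ‖(B_n*)⁻¹ x‖^{1/n}` (with `1/0 = ∞`). -/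
def R2minus (A : ℕ → (H →L[ℂ] H)ˣ) : ℝ≥0∞ :=
  ⨅ (x : H) (_ : x ≠ 0),
    (limsup (fun n : ℕ =>
      (‖ContinuousLinearMap.adjoint (wBi A n) x‖₊ : ℝ≥0∞) ^ (1 / n : ℝ)) atTop)⁻¹

/-- `R₃⁺(S_u) = sup_{x ≠ 0} limsup ‖B_n x‖^{1/n}`. -/
def R3plus (A : ℕ → (H →L[ℂ] H)ˣ) : ℝ≥0∞ :=
  ⨆ (x : H) (_ : x ≠ 0),
    limsup (fun n : ℕ => (‖(wB A n : H →L[ℂ] H) x‖₊ : ℝ≥0∞) ^ (1 / n : ℝ)) atTop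

/-- `R₃⁻(S_u) = inf_{x ≠ 0} limsup ‖B_n x‖^{1/n}`. -/
def R3minus (A : ℕ → (H →L[ℂ] H)ˣ) : ℝ≥0∞ :=
  ⨅ (x : H) (_ : x ≠ 0),
    limsup (fun n : ℕ => (‖(wB A n : H →L[ℂ] H) x‖₊ : ℝ≥0∞) ^ (1 / n : ℝ)) atTop

/-- `r₂(S_u) = 1 / limsup ‖B_n⁻¹‖^{1/n}` (with `1/0 = ∞`). -/
def r2 (A : ℕ → (H →L[ℂ] H)ˣ) : ℝ≥0∞ :=
  (limsup (fun n : ℕ => (‖wBi A n‖₊ : ℝ≥0∞) ^ (1 / n : ℝ)) atTop)⁻¹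

/-- `r₃(S_u) = 1 / liminf ‖B_n⁻¹‖^{1/n}` (with `1/0 = ∞`). -/
def r3 (A : ℕ → (H →L[ℂ] H)ˣ) : ℝ≥0∞ :=
  (liminf (fun n : ℕ => (‖wBi A n‖₊ : ℝ≥0∞) ^ (1 / n : ℝ)) atTop)⁻¹

/-- `R_𝒜(x) = 1 / limsup ‖B_n⁻¹ x_n‖^{1/n}` (with `1/0 = ∞`). -/
def RA (A : ℕ → (H →L[ℂ] H)ˣ) (x : lp (fun _ : ℕ => H) 2) : ℝ≥0∞ :=
  (limsup (fun n : ℕ => (‖wBi A n (x n)‖₊ : ℝ≥0∞) ^ (1 / n : ℝ)) atTop)⁻¹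

end Shift

/-!
Let `M` be the hyperrange `⋂ₙ range (T - v)ⁿ`. If `T - v` is bounded below then `M` is closed and
`T - v` acts invertibly on `M`, so `v` lies in the resolvent set of `T|_M`. An operator that is
bounded below and is a norm limit of invertible operators is invertible; hence the resolvent set of
`T|_M` is relatively closed in any region where `T - w` is bounded below, and by connectedness it
contains that region. So the hyperranges of all the `T - w` in the region coincide. The open disc
of radius `r₁(T)` is such a region.

If `v` is in the local resolvent set at `x`, with local resolvent function `f`, then so it is at
`f v` (use the difference quotient of `f`), whence `x` is in the hyperrange of `T - v`. For
`|v| < r₁(T)` this means `x ∈ ⋂ₙ range Tⁿ`; openness of the local resolvent set extends this to the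
closed disc.
-/

open Set
open scoped NNReal

lemma antilipschitzWith_of_comp {α β γ : Type*} [PseudoEMetricSpace α] [PseudoEMetricSpace β]
    [PseudoEMetricSpace γ] {K L : ℝ≥0} {g : β → γ} {f : α → β}
    (hgf : AntilipschitzWith K (g ∘ f)) (hg : LipschitzWith L g) :
    AntilipschitzWith (K * L) f := fun x y =>
  calc
    edist x y ≤ K * edist (g (f x)) (g (f y)) := hgf x y
    _ ≤ K * (L * edist (f x) (f y)) := by gcongr; exact hg _ _
    _ = ↑(K * L) * edist (f x) (f y) := by rw [ENNReal.coe_mul, mul_assoc]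

section Operators

variable {𝕜 E : Type*} [NontriviallyNormedField 𝕜] [NormedAddCommGroup E] [NormedSpace 𝕜 E]

lemma norm_unit_inv_le {c : ℝ} (hc : 0 < c) (u : (E →L[𝕜] E)ˣ)
    (hu : ∀ y, c * ‖y‖ ≤ ‖(u : E →L[𝕜] E) y‖) : ‖(↑u⁻¹ : E →L[𝕜] E)‖ ≤ c⁻¹ := by
  refine ContinuousLinearMap.opNorm_le_bound _ (by positivity) fun y => ?_
  have hy : (u : E →L[𝕜] E) ((↑u⁻¹ : E →L[𝕜] E) y) = y := by
    rw [← mul_apply_eq_comp, Units.mul_inv, one_apply_eq_self]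
  rw [inv_mul_eq_div, le_div_iff₀' hc]
  simpa only [hy] using hu ((↑u⁻¹ : E →L[𝕜] E) y)

lemma isUnit_of_mem_closure_of_antilipschitzWith [CompleteSpace E] {A : E →L[𝕜] E}
    (hA : A ∈ closure {B | IsUnit B}) (hbelow : ∃ K, AntilipschitzWith K A) : IsUnit A := by
  obtain ⟨c, hc, hcA⟩ := antilipschitzWith_iff_exists_mul_le_norm.1 hbelow
  obtain ⟨_, ⟨u, rfl⟩, hAu⟩ := Metric.mem_closure_iff.1 hA (c / 2) (half_pos hc)
  rw [dist_eq_norm] at hAu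
  have hcu (y : E) : c / 2 * ‖y‖ ≤ ‖(u : E →L[𝕜] E) y‖ := by
    have hsub : ‖A y‖ - ‖(u : E →L[𝕜] E) y‖ ≤ c / 2 * ‖y‖ :=
      (norm_sub_norm_le _ _).trans ((A - u).le_of_opNorm_le hAu.le y)
    linarith [hcA y]
  rcases eq_or_ne (‖(↑u⁻¹ : E →L[𝕜] E)‖) 0 with hinv | hinv
  · have : Subsingleton (E →L[𝕜] E) :=
      subsingleton_of_zero_eq_one (by rw [← u.mul_inv, norm_eq_zero.1 hinv, mul_zero])
    exact isUnit_of_subsingleton A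
  · refine (u.ofNearby A (hAu.trans_le ?_)).isUnit
    rw [le_inv_comm₀ (half_pos hc) (by positivity)]
    exact norm_unit_inv_le (half_pos hc) u hcu

lemma subset_resolventSet_of_isPreconnected [CompleteSpace E] {A : E →L[𝕜] E} {D : Set 𝕜}
    (hD : IsPreconnected D)
    (hbelow : ∀ w ∈ D, ∃ K, AntilipschitzWith K (A - algebraMap 𝕜 (E →L[𝕜] E) w))
    (hmeet : (D ∩ resolventSet 𝕜 A).Nonempty) : D ⊆ resolventSet 𝕜 A := by
  refine hD.subset_of_closure_inter_subset (spectrum.isOpen_resolventSet A) hmeet ?_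
  rintro w ⟨hw, hwD⟩
  have hcont : Continuous fun z => A - algebraMap 𝕜 (E →L[𝕜] E) z := by fun_prop
  have hlim : A - algebraMap 𝕜 (E →L[𝕜] E) w ∈ closure {B | IsUnit B} :=
    map_mem_closure (f := fun z => A - algebraMap 𝕜 (E →L[𝕜] E) z) hcont hw
      fun z hz => IsUnit.sub_iff.1 hz
  exact IsUnit.sub_iff.1 (isUnit_of_mem_closure_of_antilipschitzWith hlim (hbelow w hwD))

/-- The hyperrange (generalized range) `⋂ₙ range Sⁿ` of an operator `S`. -/
def hyperrange (S : E →L[𝕜] E) : Submodule 𝕜 E := ⨅ n : ℕ, (S ^ n).range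

lemma coe_hyperrange (S : E →L[𝕜] E) : (hyperrange S : Set E) = ⋂ n : ℕ, range ⇑(S ^ n) :=
  Submodule.coe_iInf _

lemma mem_hyperrange {S : E →L[𝕜] E} {x : E} :
    x ∈ hyperrange S ↔ ∀ n : ℕ, ∃ y, (S ^ n) y = x :=
  Submodule.mem_iInf _

lemma subset_hyperrange_of_surjOn {S : E →L[𝕜] E} {s : Set E} (hs : SurjOn S s s) :
    s ⊆ hyperrange S := by
  intro x hx
  refine mem_hyperrange.2 fun n => ?_
  obtain ⟨y, -, hy⟩ := hs.iterate n hx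
  exact ⟨y, by rw [FunLike.coe_pow_eq_iterate, hy]⟩

lemma mapsTo_hyperrange_of_commute {A S : E →L[𝕜] E} (h : Commute A S) :
    MapsTo A (hyperrange S) (hyperrange S) := by
  intro x hx
  refine mem_hyperrange.2 fun n => ?_
  obtain ⟨y, rfl⟩ := mem_hyperrange.1 hx n
  exact ⟨A y, congr($((h.pow_right n).eq.symm) y)⟩

lemma surjOn_hyperrange_of_injective {S : E →L[𝕜] E} (hS : Function.Injective S) :
    SurjOn S (hyperrange S) (hyperrange S) := by
  intro x hx
  obtain ⟨y, rfl⟩ : ∃ y, S y = x := by simpa using mem_hyperrange.1 hx 1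
  refine ⟨y, mem_hyperrange.2 fun n => ?_, rfl⟩
  obtain ⟨z, hz⟩ := mem_hyperrange.1 hx (n + 1)
  exact ⟨z, hS (by rwa [pow_succ'] at hz)⟩

variable [CompleteSpace E]

lemma isClosed_hyperrange {S : E →L[𝕜] E} {K : ℝ≥0} (hS : AntilipschitzWith K S) :
    IsClosed (hyperrange S : Set E) := by
  rw [coe_hyperrange]
  refine isClosed_iInter fun n => ?_
  obtain ⟨L, hL⟩ : ∃ L, AntilipschitzWith L ⇑(S ^ n) := by
    induction n with
    | zero => exact ⟨1, AntilipschitzWith.id⟩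
    | succ n ih =>
      obtain ⟨L, hL⟩ := ih
      exact ⟨_, hL.comp hS⟩
  exact hL.isClosed_range (S ^ n).uniformContinuous

lemma hyperrange_le_of_isPreconnected {T : E →L[𝕜] E} {D : Set 𝕜} (hD : IsPreconnected D)
    (hbelow : ∀ w ∈ D, ∃ K, AntilipschitzWith K (T - algebraMap 𝕜 (E →L[𝕜] E) w))
    {v w : 𝕜} (hv : v ∈ D) (hw : w ∈ D) :
    hyperrange (T - algebraMap 𝕜 (E →L[𝕜] E) v) ≤
      hyperrange (T - algebraMap 𝕜 (E →L[𝕜] E) w) := by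
  set M := hyperrange (T - algebraMap 𝕜 (E →L[𝕜] E) v)
  obtain ⟨K, hK⟩ := hbelow v hv
  have : CompleteSpace M := (isClosed_hyperrange hK).completeSpace_coe
  have hTM : MapsTo T M M := mapsTo_hyperrange_of_commute
    ((Commute.refl T).sub_right (Algebra.commutes v T).symm)
  set A : M →L[𝕜] M := T.restrict hTM
  have hbelowM (z : 𝕜) (hz : z ∈ D) :
      ∃ L, AntilipschitzWith L (A - algebraMap 𝕜 (M →L[𝕜] M) z) := by
    obtain ⟨L, hL⟩ := hbelow z hz
    exact ⟨L, fun x y => hL x y⟩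
  have hvA : v ∈ resolventSet 𝕜 A := by
    refine IsUnit.sub_iff.1 (ContinuousLinearMap.isUnit_iff_bijective.2 ⟨?_, fun x => ?_⟩)
    · obtain ⟨L, hL⟩ := hbelowM v hv
      exact hL.injective
    · obtain ⟨y, hy, hyx⟩ := surjOn_hyperrange_of_injective hK.injective x.2
      exact ⟨⟨y, hy⟩, Subtype.ext hyx⟩
  have hwA := subset_resolventSet_of_isPreconnected hD hbelowM ⟨v, hv, hvA⟩ hw
  refine subset_hyperrange_of_surjOn fun x hx => ?_
  obtain ⟨y, hy⟩ := (ContinuousLinearMap.isUnit_iff_bijective.1 (IsUnit.sub_iff.1 hwA)).2 ⟨x, hx⟩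
  exact ⟨y, y.2, congr_arg Subtype.val hy⟩

end Operators

section LowerBound

variable {E : Type*} [NormedAddCommGroup E] [NormedSpace ℂ E]

lemma antilipschitzWith_of_lowerBound_pos {T : E →L[ℂ] E} (hT : 0 < lowerBound T) :
    AntilipschitzWith (lowerBound T).toNNReal⁻¹ T := by
  refine antilipschitz_of_bound_of_norm_one (𝕜 := ℂ) T fun x hx => ?_
  have hle : lowerBound T ≤ ‖T x‖ :=
    csInf_le ⟨0, forall_mem_image.2 fun y _ => norm_nonneg (T y)⟩ ⟨x, hx, rfl⟩
  rwa [NNReal.coe_inv, Real.coe_toNNReal _ hT.le, inv_mul_eq_div, one_le_div hT]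

lemma exists_pow_lt_lowerBound_of_lt_r1 {T : E →L[ℂ] E} {l : ℂ} (hl : (‖l‖₊ : ℝ≥0∞) < r1 T) :
    ∃ n : ℕ, ‖l ^ n‖₊ < (lowerBound (T ^ n)).toNNReal := by
  obtain ⟨n, hn⟩ := lt_iSup_iff.1 hl
  refine ⟨n + 1, ?_⟩
  rw [← ENNReal.coe_lt_coe, nnnorm_pow, ENNReal.coe_pow, ← ENNReal.rpow_natCast]
  push_cast
  rwa [one_div, ENNReal.lt_rpow_inv_iff (by positivity)] at hn

lemma exists_antilipschitzWith_sub_algebraMap_of_lt_r1 {T : E →L[ℂ] E} {l : ℂ}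
    (hl : (‖l‖₊ : ℝ≥0∞) < r1 T) :
    ∃ K, AntilipschitzWith K (T - algebraMap ℂ (E →L[ℂ] E) l) := by
  obtain ⟨n, hn⟩ := exists_pow_lt_lowerBound_of_lt_r1 hl
  have hpow : AntilipschitzWith _ ⇑(T ^ n) :=
    antilipschitzWith_of_lowerBound_pos (Real.toNNReal_pos.1 (pos_of_gt hn))
  have hsub : AntilipschitzWith _ fun x => (T ^ n) x + -(l ^ n • x) :=
    hpow.add_lipschitzWith (lipschitzWith_smul (l ^ n)).neg (by rwa [inv_inv])
  obtain ⟨Q, hQ⟩ : ∃ Q : E →L[ℂ] E, Q * (T - algebraMap ℂ (E →L[ℂ] E) l) =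
      T ^ n - algebraMap ℂ (E →L[ℂ] E) (l ^ n) :=
    ⟨_, by rw [map_pow, (Algebra.commute_algebraMap_right l T).geom_sum₂_mul n]⟩
  have hcomp : ⇑Q ∘ ⇑(T - algebraMap ℂ (E →L[ℂ] E) l) = fun x => (T ^ n) x + -(l ^ n • x) := by
    funext x
    exact congr($hQ x).trans (sub_eq_add_neg _ _)
  exact ⟨_, antilipschitzWith_of_comp (hcomp ▸ hsub) Q.lipschitz⟩

end LowerBound

section LocalSpectrum

variable {E : Type*} [NormedAddCommGroup E] [NormedSpace ℂ E]

lemma isOpen_localResolventSet (T : E →L[ℂ] E) (x : E) : IsOpen (localResolventSet T x) := by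
  refine isOpen_iff_mem_nhds.2 ?_
  rintro l ⟨U, hU, hl, hf⟩
  exact mem_of_superset (hU.mem_nhds hl) fun m hm => ⟨U, hU, hm, hf⟩

lemma exists_mem_localResolventSet_norm_lt {T : E →L[ℂ] E} {x : E} {l : ℂ}
    (hl : l ∈ localResolventSet T x) (hl0 : l ≠ 0) : ∃ w ∈ localResolventSet T x, ‖w‖ < ‖l‖ := by
  have hcl : l ∈ closure (Metric.ball (0 : ℂ) ‖l‖) := by
    rw [closure_ball _ (norm_ne_zero_iff.2 hl0), mem_closedBall_zero_iff]
  obtain ⟨w, hw, hwl⟩ := mem_closure_iff.1 hcl _ (isOpen_localResolventSet T x) hl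
  exact ⟨w, hw, mem_ball_zero_iff.1 hwl⟩

variable [CompleteSpace E]

lemma surjOn_setOf_mem_localResolventSet (T : E →L[ℂ] E) (l : ℂ) :
    SurjOn (T - algebraMap ℂ (E →L[ℂ] E) l)
      {x | l ∈ localResolventSet T x} {x | l ∈ localResolventSet T x} := by
  rintro x ⟨U, hU, hl, f, hf, hfx⟩
  refine ⟨f l, ⟨U, hU, hl, dslope f l, ?_⟩, hfx l hl⟩
  have hdiff : DifferentiableOn ℂ (dslope f l) U :=
    (Complex.differentiableOn_dslope (hU.mem_nhds hl)).2 hf.differentiableOn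
  refine ⟨hdiff.analyticOnNhd hU, ?_⟩
  have hne : EqOn (fun m => T (dslope f l m) - m • dslope f l m) (fun _ => f l) (U ∩ {l}ᶜ) := by
    rintro m ⟨hm, hml⟩
    refine smul_right_injective E (sub_ne_zero.2 hml) ?_
    calc (m - l) • (T (dslope f l m) - m • dslope f l m)
        = T (f m - f l) - m • (f m - f l) := by
          rw [← sub_smul_dslope f l m, map_smul, smul_sub, smul_comm m]
      _ = (T (f m) - m • f m) - (T (f l) - l • f l) + (m - l) • f l := by
          rw [map_sub]; module
      _ = (m - l) • f l := by rw [hfx m hm, hfx l hl, sub_self, zero_add]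
  have hcont : ContinuousOn (fun m => T (dslope f l m) - m • dslope f l m) U := by
    have := hdiff.continuousOn
    fun_prop
  exact hne.of_subset_closure hcont continuousOn_const inter_subset_left
    ((dense_compl_singleton l).open_subset_closure_inter hU)

lemma mem_hyperrange_of_mem_localResolventSet {T : E →L[ℂ] E} {x : E} {l : ℂ}
    (hl : l ∈ localResolventSet T x) : x ∈ hyperrange (T - algebraMap ℂ (E →L[ℂ] E) l) :=
  subset_hyperrange_of_surjOn (surjOn_setOf_mem_localResolventSet T l) hl

theorem mem_hyperrange_of_mem_localResolventSet_of_le_r1 {T : E →L[ℂ] E} {x : E} {l : ℂ}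
    (hl : l ∈ localResolventSet T x) (hlr : (‖l‖₊ : ℝ≥0∞) ≤ r1 T) : x ∈ hyperrange T := by
  suffices hx : x ∈ hyperrange (T - algebraMap ℂ (E →L[ℂ] E) 0) by
    rwa [map_zero, sub_zero] at hx
  rcases eq_or_ne l 0 with rfl | hl0
  · exact mem_hyperrange_of_mem_localResolventSet hl
  obtain ⟨w, hw, hwl⟩ := exists_mem_localResolventSet_norm_lt hl hl0
  refine hyperrange_le_of_isPreconnected (convex_ball (0 : ℂ) ‖l‖).isPreconnected
    (fun z hz => exists_antilipschitzWith_sub_algebraMap_of_lt_r1 (lt_of_lt_of_le ?_ hlr))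
    (mem_ball_zero_iff.2 hwl) (Metric.mem_ball_self (norm_pos_iff.2 hl0))
    (mem_hyperrange_of_mem_localResolventSet hw)
  exact ENNReal.coe_lt_coe.2 (mem_ball_zero_iff.1 hz)

end LocalSpectrum

theorem stmt0_general {E : Type*} [NormedAddCommGroup E] [NormedSpace ℂ E] [CompleteSpace E]
    (T : E →L[ℂ] E) {x : E} (hx : x ∉ ⋂ n : ℕ, range (⇑(T ^ n) : E → E)) :
    {l : ℂ | (‖l‖₊ : ℝ≥0∞) ≤ r1 T} ⊆ localSpectrum T x := by
  intro l hlr hl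
  rw [← coe_hyperrange] at hx
  exact hx (mem_hyperrange_of_mem_localResolventSet_of_le_r1 hl hlr)

theorem stmt0 {K : Type*} [NormedAddCommGroup K] [InnerProductSpace ℂ K] [CompleteSpace K]
    (T : K →L[ℂ] K)
    (hT : (⋂ n : ℕ, Set.range (⇑(T ^ n) : K → K)) = {0}) :
    ∀ x : K, x ≠ 0 → {l : ℂ | (‖l‖₊ : ℝ≥0∞) ≤ r1 T} ⊆ localSpectrum T x := by
  intro x hx
  exact stmt0_general T (by rwa [hT, mem_singleton_iff])
end
end

section
/- The set ℜ(S_u*) of points at which the adjoint S_u* fails to have the single-valued extension property equals the open disc {λ ∈ ℂ : |λ| < R₂⁺(S_u)}. In particular, S_u* has the single-valued extension property if and only if R₂⁺(S_u) = 0. -/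
open Filter Topology ENNReal

noncomputable section

/-!
If `S* y = λ y`, then `y_n = λⁿ (B_n*)⁻¹ y_0`. So the eigenvectors of `S*` are the values at `λ` of
the power series `∑ λⁿ e_n ((B_n*)⁻¹ x)`, `x ≠ 0`, whose radius of convergence is
`1 / limsup ‖(B_n*)⁻¹ x‖^{1/n}`. Inside its disc of convergence this series is an analytic
eigenvector, so SVEP fails there. Conversely, zeros of analytic functions are isolated, so if SVEP
fails at `λ₀` then `S*` has eigenvalues `λ` near `λ₀` with `|λ| > |λ₀|`, and the series of such an
eigenvector has bounded terms at `λ`, which forces its radius to be at least `|λ|`.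
-/

open scoped InnerProduct

section SVEP

variable {E : Type*} [NormedAddCommGroup E] [NormedSpace ℂ E] {T : E →L[ℂ] E} {l₀ : ℂ}

theorem eventually_mem_pointSpectrum_of_mem_svepFails (h : l₀ ∈ svepFails T) :
    ∀ᶠ l in 𝓝[≠] l₀, l ∈ pointSpectrum T := by
  simp only [svepFails, Set.mem_ofPred_eq] at h
  push Not at h
  obtain ⟨r, hr, f, hf, hTf, z, hz, hfz⟩ := h
  have hball : Metric.ball l₀ r ∈ 𝓝[≠] l₀ := nhdsWithin_le_nhds (Metric.ball_mem_nhds l₀ hr)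
  have hne : ∀ᶠ l in 𝓝[≠] l₀, f l ≠ 0 :=
    (hf l₀ (Metric.mem_ball_self hr)).eventually_eq_zero_or_eventually_ne_zero.resolve_left
      fun hzero ↦ hfz <| hf.eqOn_zero_of_preconnected_of_eventuallyEq_zero
        (convex_ball l₀ r).isPreconnected (Metric.mem_ball_self hr) hzero hz
  filter_upwards [hne, hball] with l hfl hl
  exact ⟨f l, hfl, sub_eq_zero.1 (hTf l hl)⟩

theorem mem_svepFails_of_analyticOnNhd {f : ℂ → E} {U : Set ℂ} (hU : U ∈ 𝓝 l₀)
    (hf : AnalyticOnNhd ℂ f U) (hTf : ∀ l ∈ U, T (f l) = l • f l) (hne : f l₀ ≠ 0) :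
    l₀ ∈ svepFails T := by
  obtain ⟨r, hr, hball⟩ := Metric.mem_nhds_iff.1 hU
  exact fun hsvep ↦ hne <| hsvep r hr f (hf.mono hball)
    (fun l hl ↦ sub_eq_zero.2 (hTf l (hball hl))) l₀ (Metric.mem_ball_self hr)

end SVEP

theorem frequently_nhdsNE_norm_lt {E : Type*} [NormedAddCommGroup E] [NormedSpace ℝ E]
    [Nontrivial E] (x : E) : ∃ᶠ y in 𝓝[≠] x, ‖x‖ < ‖y‖ := by
  have hfreq : ∃ᶠ y in 𝓝 x, y ∈ (Metric.closedBall (0 : E) ‖x‖)ᶜ := by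
    rw [← mem_closure_iff_frequently, closure_compl, interior_closedBall']
    simp
  refine frequently_nhdsWithin_iff.2 (hfreq.mono fun y hy ↦ ?_)
  have hxy : ‖x‖ < ‖y‖ := by simpa using hy
  exact ⟨hxy, fun h ↦ hxy.ne' (congrArg norm h)⟩

theorem setOf_enorm_lt_eq_empty_iff {E : Type*} [TopologicalSpace E] [ESeminormedAddMonoid E]
    {R : ℝ≥0∞} : {x : E | ‖x‖ₑ < R} = ∅ ↔ R = 0 := by
  refine ⟨fun h ↦ ?_, fun h ↦ by simp [h]⟩
  have hzero : (0 : E) ∉ {x : E | ‖x‖ₑ < R} := by simp [h]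
  simpa using hzero

section SingleSeries

variable (𝕜 : Type*) [NontriviallyNormedField 𝕜] {E : ℕ → Type*} [∀ n, NormedAddCommGroup (E n)]
  [∀ n, NormedSpace 𝕜 (E n)] (p : ℝ≥0∞) [Fact (1 ≤ p)]

/-- The formal power series `∑ zⁿ e_n(v_n)` with values in the `ℓᵖ`-direct sum of the `E n`, where
`e_n` embeds the `n`-th summand. For `v_n = (B_n*)⁻¹ x` its sum is an eigenvector of `S*`. -/
def singleSeries (v : ∀ n, E n) : FormalMultilinearSeries 𝕜 𝕜 (lp E p) :=
  fun n ↦ ContinuousMultilinearMap.mkPiRing 𝕜 (Fin n) (lp.single p n (v n))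

variable {𝕜 p} (v : ∀ n, E n)

theorem norm_singleSeries (n : ℕ) : ‖singleSeries 𝕜 p v n‖ = ‖v n‖ := by
  rw [singleSeries, ContinuousMultilinearMap.norm_mkPiRing,
    lp.norm_single (zero_lt_one.trans_le Fact.out)]

theorem radius_singleSeries :
    (singleSeries 𝕜 p v).radius =
      (limsup (fun n : ℕ ↦ (‖v n‖₊ : ℝ≥0∞) ^ (1 / n : ℝ)) atTop)⁻¹ := by
  have hnorm (n : ℕ) : ‖singleSeries 𝕜 p v n‖₊ = ‖v n‖₊ := NNReal.eq (norm_singleSeries v n)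
  simp only [FormalMultilinearSeries.radius_eq_liminf, ENNReal.inv_limsup, hnorm, one_div,
    ENNReal.coe_rpow_of_nonneg _ (inv_nonneg.2 (Nat.cast_nonneg _))]

theorem singleSeries_apply_apply (z : 𝕜) (k n : ℕ) :
    singleSeries 𝕜 p v k (fun _ ↦ z) n = if k = n then z ^ n • v n else 0 := by
  rw [singleSeries, ContinuousMultilinearMap.mkPiRing_apply, Fin.prod_const, lp.coeFn_smul,
    Pi.smul_apply]
  split_ifs with hkn
  · subst hkn
    rw [lp.single_apply_self]
  · rw [lp.single_apply_ne _ _ _ (Ne.symm hkn), smul_zero]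

theorem singleSeries_sum_apply [∀ n, CompleteSpace (E n)] {z : 𝕜}
    (hz : ‖z‖ₑ < (singleSeries 𝕜 p v).radius) (n : ℕ) :
    (singleSeries 𝕜 p v).sum z n = z ^ n • v n := by
  have hsum := ((singleSeries 𝕜 p v).hasSum (mem_eball_zero_iff.2 hz)).mapL (lp.evalCLM 𝕜 E p n)
  refine hsum.unique ?_
  convert! hasSum_ite_eq n (z ^ n • v n) using 2 with k
  exact singleSeries_apply_apply v z k n

theorem enorm_le_radius_singleSeries {v} {z : 𝕜} {y : lp E p} (hy : ∀ n, y n = z ^ n • v n) :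
    ‖z‖ₑ ≤ (singleSeries 𝕜 p v).radius := by
  refine FormalMultilinearSeries.le_radius_of_bound _ ‖y‖ fun n ↦ ?_
  calc ‖singleSeries 𝕜 p v n‖ * (‖z‖₊ : ℝ) ^ n = ‖y n‖ := by
        rw [norm_singleSeries, hy, norm_smul, norm_pow, coe_nnnorm, mul_comm]
    _ ≤ ‖y‖ := lp.norm_apply_le_norm (zero_lt_one.trans_le Fact.out).ne' y n

end SingleSeries

section WeightedShift

/-- `S` is the unilateral shift `(x_0, x_1, …) ↦ (0, A_0 x_0, A_1 x_1, …)` with operator weights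
`A_n`, on the `ℓ²`-direct sum of a sequence of inner product spaces. -/
structure IsWeightedShift {𝕜 : Type*} [RCLike 𝕜] {E : ℕ → Type*} [∀ n, NormedAddCommGroup (E n)]
    [∀ n, InnerProductSpace 𝕜 (E n)] (A : ∀ n, E n →L[𝕜] E (n + 1)) (S : lp E 2 →L[𝕜] lp E 2) :
    Prop where
  apply_zero (x : lp E 2) : S x 0 = 0
  apply_succ (x : lp E 2) (n : ℕ) : S x (n + 1) = A n (x n)

namespace IsWeightedShift

variable {𝕜 : Type*} [RCLike 𝕜] {E : ℕ → Type*} [∀ n, NormedAddCommGroup (E n)]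
  [∀ n, InnerProductSpace 𝕜 (E n)] {A : ∀ n, E n →L[𝕜] E (n + 1)} {S : lp E 2 →L[𝕜] lp E 2}

theorem apply_single (hS : IsWeightedShift A S) (n : ℕ) (y : E n) :
    S (lp.single 2 n y) = lp.single 2 (n + 1) (A n y) := by
  ext k
  rcases k with _ | k
  · rw [hS.apply_zero, lp.single_apply_ne _ _ _ n.succ_ne_zero.symm]
  · rw [hS.apply_succ]
    obtain rfl | hkn := eq_or_ne k n
    · rw [lp.single_apply_self, lp.single_apply_self]
    · rw [lp.single_apply_ne _ _ _ hkn, lp.single_apply_ne _ _ _ (by omega), map_zero]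

theorem adjoint_apply [∀ n, CompleteSpace (E n)] (hS : IsWeightedShift A S) (x : lp E 2) (n : ℕ) :
    (S†) x n = ((A n)†) (x (n + 1)) := by
  refine ext_inner_left 𝕜 fun y ↦ ?_
  rw [← lp.inner_single_left, ContinuousLinearMap.adjoint_inner_right, hS.apply_single,
    lp.inner_single_left, ContinuousLinearMap.adjoint_inner_right]

end IsWeightedShift

theorem adjoint_unit_apply_eq_iff {𝕜 H : Type*} [RCLike 𝕜] [NormedAddCommGroup H]
    [InnerProductSpace 𝕜 H] [CompleteSpace H] (u : (H →L[𝕜] H)ˣ) {x y : H} :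
    ((u : H →L[𝕜] H)†) x = y ↔ x = ((↑u⁻¹ : H →L[𝕜] H)†) y :=
  (ContinuousLinearEquiv.unitsEquiv 𝕜 H (star u)).eq_symm_apply.symm

variable {H : Type*} [NormedAddCommGroup H] [InnerProductSpace ℂ H] [CompleteSpace H]
  {A : ℕ → (H →L[ℂ] H)ˣ} {S : lp (fun _ : ℕ ↦ H) 2 →L[ℂ] lp (fun _ : ℕ ↦ H) 2}

theorem adjoint_wBi_zero_apply (A : ℕ → (H →L[ℂ] H)ˣ) (x : H) : ((wBi A 0)†) x = x := by
  simp [wBi, wB, ← ContinuousLinearMap.star_eq_adjoint]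

theorem adjoint_wBi_succ_apply (A : ℕ → (H →L[ℂ] H)ˣ) (n : ℕ) (x : H) :
    ((wBi A (n + 1))†) x = ((↑(A n)⁻¹ : H →L[ℂ] H)†) (((wBi A n)†) x) := by
  simp [wBi, wB, ← ContinuousLinearMap.star_eq_adjoint]

namespace IsWeightedShift

theorem adjoint_apply_eq_smul_iff (hS : IsWeightedShift (fun n ↦ (A n : H →L[ℂ] H)) S) {l : ℂ}
    {y : lp (fun _ : ℕ ↦ H) 2} :
    (S†) y = l • y ↔ ∀ n, y n = l ^ n • ((wBi A n)†) (y 0) := by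
  have hrec : (S†) y = l • y ↔
      ∀ n, y (n + 1) = l • ((↑(A n)⁻¹ : H →L[ℂ] H)†) (y n) := by
    simp only [lp.ext_iff, funext_iff, hS.adjoint_apply, lp.coeFn_smul, Pi.smul_apply,
      adjoint_unit_apply_eq_iff, map_smul]
  rw [hrec]
  constructor
  · intro h n
    induction n with
    | zero => rw [pow_zero, one_smul, adjoint_wBi_zero_apply]
    | succ n ih => rw [h, ih, map_smul, smul_smul, ← pow_succ', adjoint_wBi_succ_apply]
  · intro h n
    rw [h (n + 1), h n, map_smul, smul_smul, ← pow_succ', adjoint_wBi_succ_apply]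

theorem enorm_le_R2plus_of_mem_pointSpectrum_adjoint
    (hS : IsWeightedShift (fun n ↦ (A n : H →L[ℂ] H)) S) {l : ℂ} (hl : l ∈ pointSpectrum (S†)) :
    ‖l‖ₑ ≤ R2plus A := by
  obtain ⟨y, hy, hSy⟩ := hl
  have hcoord := hS.adjoint_apply_eq_smul_iff.1 hSy
  have hy0 : y 0 ≠ 0 := fun h ↦ hy <| lp.ext <| funext fun n ↦ by simp [hcoord n, h]
  calc ‖l‖ₑ ≤ (singleSeries ℂ 2 fun n ↦ ((wBi A n)†) (y 0)).radius :=
        enorm_le_radius_singleSeries hcoord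
    _ ≤ R2plus A := by
        rw [radius_singleSeries]
        exact le_iSup₂_of_le (y 0) hy0 le_rfl

theorem mem_svepFails_adjoint_of_enorm_lt_R2plus
    (hS : IsWeightedShift (fun n ↦ (A n : H →L[ℂ] H)) S) {l₀ : ℂ} (hl₀ : ‖l₀‖ₑ < R2plus A) :
    l₀ ∈ svepFails (S†) := by
  obtain ⟨x, hx, hlt⟩ := by simpa only [R2plus, lt_iSup_iff] using hl₀
  let φ := singleSeries ℂ 2 fun n ↦ ((wBi A n)†) x
  replace hlt : ‖l₀‖ₑ < φ.radius := by rwa [radius_singleSeries]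
  have hsum {l : ℂ} (hl : l ∈ Metric.eball 0 φ.radius) (n : ℕ) :
      φ.sum l n = l ^ n • ((wBi A n)†) x :=
    singleSeries_sum_apply _ (mem_eball_zero_iff.1 hl) n
  have hsum_zero {l : ℂ} (hl : l ∈ Metric.eball 0 φ.radius) : φ.sum l 0 = x := by
    rw [hsum hl, pow_zero, one_smul, adjoint_wBi_zero_apply]
  have hmem : l₀ ∈ Metric.eball 0 φ.radius := mem_eball_zero_iff.2 hlt
  refine mem_svepFails_of_analyticOnNhd (Metric.isOpen_eball.mem_nhds hmem)
    (φ.hasFPowerSeriesOnBall (bot_le.trans_lt hlt)).analyticOnNhd (fun l hl ↦ ?_) fun h ↦ hx ?_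
  · exact hS.adjoint_apply_eq_smul_iff.2 fun n ↦ by rw [hsum hl, hsum_zero hl]
  · rw [← hsum_zero hmem, h, lp.coeFn_zero, Pi.zero_apply]

theorem svepFails_adjoint (hS : IsWeightedShift (fun n ↦ (A n : H →L[ℂ] H)) S) :
    svepFails (S†) = {l : ℂ | ‖l‖ₑ < R2plus A} := by
  ext l₀
  refine ⟨fun hl₀ ↦ ?_, hS.mem_svepFails_adjoint_of_enorm_lt_R2plus⟩
  obtain ⟨l, hlt, hl⟩ := ((frequently_nhdsNE_norm_lt l₀).and_eventually
    (eventually_mem_pointSpectrum_of_mem_svepFails hl₀)).exists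
  calc ‖l₀‖ₑ < ‖l‖ₑ := (lt_iff_lt_of_le_iff_le enorm_le_iff_norm_le).2 hlt
    _ ≤ R2plus A := hS.enorm_le_R2plus_of_mem_pointSpectrum_adjoint hl

end IsWeightedShift

end WeightedShift

theorem stmt9 {H : Type*} [NormedAddCommGroup H] [InnerProductSpace ℂ H] [CompleteSpace H]
    (A : ℕ → (H →L[ℂ] H)ˣ)
    (hbdd : ∃ C : ℝ, ∀ n, ‖(A n : H →L[ℂ] H)‖ ≤ C)
    (S : lp (fun _ : ℕ => H) 2 →L[ℂ] lp (fun _ : ℕ => H) 2)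
    (hS0 : ∀ x : lp (fun _ : ℕ => H) 2, S x 0 = 0)
    (hS : ∀ (x : lp (fun _ : ℕ => H) 2) (n : ℕ), S x (n + 1) = (A n : H →L[ℂ] H) (x n)) :
    svepFails (ContinuousLinearMap.adjoint S) = {l : ℂ | (‖l‖₊ : ℝ≥0∞) < R2plus A} ∧
    (svepFails (ContinuousLinearMap.adjoint S) = ∅ ↔ R2plus A = 0) := by
  have hshift : IsWeightedShift (fun n ↦ (A n : H →L[ℂ] H)) S := ⟨hS0, hS⟩
  have hfails := hshift.svepFails_adjoint
  exact ⟨hfails, hfails ▸ setOf_enorm_lt_eq_empty_iff⟩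
end
end

section
/- For every nonzero x ∈ Ĥ, the local spectral radius of S_u at x satisfies R₃⁻(S_u) ≤ r_{S_u}(x) ≤ r(S_u). -/
open Filter Topology ENNReal

noncomputable section

/-!
For the lower bound, choose `k` with `x k ≠ 0` and `y ≠ 0` with `B_k y = x k`. The shift carries
the `k`-th coordinate of `x` along the orbit of `y`, so `B_{k+n} y` is the coordinate `k + n` of
`S ^ n x` and `‖B_{k+n} y‖ ≤ ‖S ^ n x‖`. Replacing the root of order `n` by the one of order `n + k`
raises to the power `n / (n + k) → 1`, which does not increase the limsup. The upper bound is
Gelfand's formula, since `‖T ^ n x‖ ≤ ‖T ^ n‖ ‖x‖`.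
-/

theorem tendsto_const_ennrpow {ι : Type*} {l : Filter ι} {c : ℝ≥0∞} (hc₀ : c ≠ 0) (hc : c ≠ ∞)
    {e : ι → ℝ} {t : ℝ} (he : Tendsto e l (𝓝 t)) :
    Tendsto (fun i => c ^ e i) l (𝓝 (c ^ t)) := by
  lift c to NNReal using hc
  have hc₀ : c ≠ 0 := by simpa using hc₀
  simp only [← ENNReal.coe_rpow_of_ne_zero hc₀, ENNReal.tendsto_coe]
  exact tendsto_const_nhds.nnrpow he (Or.inl hc₀)

theorem limsup_rpow_le_limsup_of_tendsto_one {ι : Type*} {l : Filter ι} (u : ι → ℝ≥0∞) {e : ι → ℝ}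
    (he : Tendsto e l (𝓝 1)) : limsup (fun i => u i ^ e i) l ≤ limsup u l := by
  rcases l.eq_or_neBot with rfl | _
  · simp
  refine le_of_forall_gt_imp_ge_of_dense fun c hc => ?_
  rcases eq_or_ne c ∞ with rfl | hc_top
  · exact le_top
  have hlim : Tendsto (fun i => c ^ e i) l (𝓝 c) := by
    simpa using tendsto_const_ennrpow hc.ne_bot hc_top he
  rw [← hlim.limsup_eq]
  refine limsup_le_limsup ?_
  filter_upwards [eventually_lt_of_limsup_lt hc, he.eventually_const_le zero_lt_one]
    with i hui hei
  exact ENNReal.rpow_le_rpow hui.le hei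

theorem limsup_rpow_one_div_le_limsup_add (b : ℕ → ℝ≥0∞) (k : ℕ) :
    limsup (fun n : ℕ => b n ^ (1 / n : ℝ)) atTop
      ≤ limsup (fun n : ℕ => b (n + k) ^ (1 / n : ℝ)) atTop := by
  have hroot : ∀ᶠ n : ℕ in atTop, b (n + k) ^ (1 / (n + k : ℕ) : ℝ)
      = (b (n + k) ^ (1 / n : ℝ)) ^ ((n : ℝ) / (n + k)) := by
    filter_upwards [eventually_ne_atTop 0] with n hn
    rw [← ENNReal.rpow_mul, Nat.cast_add]
    field_simp
  rw [← limsup_nat_add _ k, limsup_congr hroot]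
  exact limsup_rpow_le_limsup_of_tendsto_one _ (tendsto_natCast_div_add_atTop (k : ℝ))

theorem localSpecRad_le_spectralRadius {E : Type*} [NormedAddCommGroup E] [NormedSpace ℂ E]
    [CompleteSpace E] (T : E →L[ℂ] E) (x : E) : localSpecRad T x ≤ spectralRadius ℂ T := by
  -- `‖x‖ + 1` rather than `‖x‖`, whose `n`-th roots do not tend to `1` when `x = 0`
  set c : ℝ≥0∞ := ‖x‖₊ + 1
  have hc : Tendsto (fun n : ℕ => c ^ (1 / n : ℝ)) atTop (𝓝 1) := by
    simpa using tendsto_const_ennrpow (c := c) (by simp [c]) (by simp [c])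
      tendsto_one_div_atTop_nhds_zero_nat
  have hgelfand : Tendsto (fun n : ℕ => (‖T ^ n‖₊ : ℝ≥0∞) ^ (1 / n : ℝ) * c ^ (1 / n : ℝ)) atTop
      (𝓝 (spectralRadius ℂ T)) := by
    simpa using ENNReal.Tendsto.mul
      (spectrum.pow_nnnorm_pow_one_div_tendsto_nhds_spectralRadius T) (Or.inr ENNReal.one_ne_top)
      hc (Or.inl one_ne_zero)
  rw [localSpecRad, ← hgelfand.limsup_eq]
  refine limsup_le_limsup (Eventually.of_forall fun n => ?_)
  calc (‖(T ^ n) x‖₊ : ℝ≥0∞) ^ (1 / n : ℝ)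
      ≤ (‖T ^ n‖₊ * c) ^ (1 / n : ℝ) := by
        gcongr
        calc (‖(T ^ n) x‖₊ : ℝ≥0∞) ≤ ‖T ^ n‖₊ * ‖x‖₊ := mod_cast (T ^ n).le_opNNNorm x
          _ ≤ ‖T ^ n‖₊ * c := by gcongr; exact le_self_add
    _ = (‖T ^ n‖₊ : ℝ≥0∞) ^ (1 / n : ℝ) * c ^ (1 / n : ℝ) :=
        ENNReal.mul_rpow_of_nonneg _ _ (by positivity)

section WeightedShift

variable {p : ℝ≥0∞} [Fact (1 ≤ p)] {E : ℕ → Type*} [∀ n, NormedAddCommGroup (E n)]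
  [∀ n, NormedSpace ℂ (E n)] {S : lp E p →L[ℂ] lp E p}

theorem weightedShift_pow_apply_add {A : ∀ n, E n → E (n + 1)}
    (hS : ∀ (x : lp E p) (n : ℕ), S x (n + 1) = A n (x n))
    {u : ∀ n, E n} (hu : ∀ n, u (n + 1) = A n (u n)) {x : lp E p} {k : ℕ} (hk : x k = u k) (n : ℕ) :
    (S ^ n) x (k + n) = u (k + n) := by
  induction n with
  | zero => exact hk
  | succ n ih =>
    calc (S ^ (n + 1)) x (k + n + 1) = S ((S ^ n) x) (k + n + 1) := by
          rw [pow_succ', mul_apply_eq_comp]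
      _ = A (k + n) (u (k + n)) := by rw [hS, ih]
      _ = u (k + n + 1) := (hu _).symm

theorem limsup_orbit_le_localSpecRad {A : ∀ n, E n → E (n + 1)}
    (hS : ∀ (x : lp E p) (n : ℕ), S x (n + 1) = A n (x n))
    {u : ∀ n, E n} (hu : ∀ n, u (n + 1) = A n (u n)) {x : lp E p} {k : ℕ} (hk : x k = u k) :
    limsup (fun n : ℕ => (‖u n‖₊ : ℝ≥0∞) ^ (1 / n : ℝ)) atTop ≤ localSpecRad S x := by
  have hcoord (n : ℕ) : ‖u (n + k)‖₊ ≤ ‖(S ^ n) x‖₊ := by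
    rw [add_comm, ← weightedShift_pow_apply_add hS hu hk]
    exact lp.norm_apply_le_norm (zero_lt_one.trans_le Fact.out).ne' _ _
  refine (limsup_rpow_one_div_le_limsup_add (fun n => ‖u n‖₊) k).trans ?_
  refine limsup_le_limsup (Eventually.of_forall fun n => ?_)
  dsimp only
  gcongr
  exact hcoord n

variable {A : ∀ n, E n →L[ℂ] E (n + 1)} {B : ∀ n, E 0 →L[ℂ] E n}

theorem surjective_weightProduct (hA : ∀ n, Function.Surjective (A n))
    (hB₀ : B 0 = .id ℂ (E 0)) (hB : ∀ n, B (n + 1) = A n ∘L B n) :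
    ∀ n, Function.Surjective (B n)
  | 0 => by simpa [hB₀] using Function.surjective_id
  | n + 1 => by
    rw [hB, ContinuousLinearMap.coe_comp]
    exact (hA n).comp (surjective_weightProduct hA hB₀ hB n)

theorem iInf_limsup_weightProduct_le_localSpecRad (hA : ∀ n, Function.Surjective (A n))
    (hB₀ : B 0 = .id ℂ (E 0)) (hB : ∀ n, B (n + 1) = A n ∘L B n)
    (hS : ∀ (x : lp E p) (n : ℕ), S x (n + 1) = A n (x n)) {x : lp E p} (hx : x ≠ 0) :
    (⨅ (y : E 0) (_ : y ≠ 0), limsup (fun n : ℕ => (‖B n y‖₊ : ℝ≥0∞) ^ (1 / n : ℝ)) atTop)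
      ≤ localSpecRad S x := by
  obtain ⟨k, hxk⟩ : ∃ k, x k ≠ 0 := by
    by_contra! h
    exact hx (lp.ext (funext h))
  obtain ⟨y, hy⟩ := surjective_weightProduct hA hB₀ hB k (x k)
  have hy₀ : y ≠ 0 := by
    rintro rfl
    exact hxk (by rw [← hy, map_zero])
  have horbit (n : ℕ) : B (n + 1) y = A n (B n y) := by rw [hB, ContinuousLinearMap.comp_apply]
  exact (iInf₂_le y hy₀).trans (limsup_orbit_le_localSpecRad hS horbit hy.symm)

theorem stmt11_general [∀ n, CompleteSpace (E n)] (hA : ∀ n, Function.Surjective (A n))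
    (hB₀ : B 0 = .id ℂ (E 0)) (hB : ∀ n, B (n + 1) = A n ∘L B n)
    (hS : ∀ (x : lp E p) (n : ℕ), S x (n + 1) = A n (x n)) {x : lp E p} (hx : x ≠ 0) :
    (⨅ (y : E 0) (_ : y ≠ 0), limsup (fun n : ℕ => (‖B n y‖₊ : ℝ≥0∞) ^ (1 / n : ℝ)) atTop)
        ≤ localSpecRad S x ∧
      localSpecRad S x ≤ spectralRadius ℂ S :=
  ⟨iInf_limsup_weightProduct_le_localSpecRad hA hB₀ hB hS hx, localSpecRad_le_spectralRadius S x⟩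

end WeightedShift

theorem stmt11 {H : Type*} [NormedAddCommGroup H] [InnerProductSpace ℂ H] [CompleteSpace H]
    (A : ℕ → (H →L[ℂ] H)ˣ)
    (hbdd : ∃ C : ℝ, ∀ n, ‖(A n : H →L[ℂ] H)‖ ≤ C)
    (S : lp (fun _ : ℕ => H) 2 →L[ℂ] lp (fun _ : ℕ => H) 2)
    (hS0 : ∀ x : lp (fun _ : ℕ => H) 2, S x 0 = 0)
    (hS : ∀ (x : lp (fun _ : ℕ => H) 2) (n : ℕ), S x (n + 1) = (A n : H →L[ℂ] H) (x n)) :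
    ∀ x : lp (fun _ : ℕ => H) 2, x ≠ 0 →
      R3minus A ≤ localSpecRad S x ∧ localSpecRad S x ≤ spectralRadius ℂ S := by
  exact fun _ hx => stmt11_general (E := fun _ => H) (A := fun n => A n) (B := fun n => wB A n)
    (fun n => (ContinuousLinearEquiv.ofUnit (A n)).surjective) rfl (fun _ => rfl) hS hx
end
end

section
/- For every nonzero element x = (x_0, x_1, ...) ∈ Ĥ, the closed disc {λ ∈ ℂ : |λ| ≤ min(R_A(x), r₃(S_u))} is contained in the local spectrum σ_{S_u}(x). -/
open Filter Topology ENNReal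

noncomputable section

/-!
The maps `φ n x = B_n⁻¹ x_n` turn the shift into multiplication by the variable on power series
`∑ zⁿ φ n x`: they satisfy `φ 0 ∘ S = 0` and `φ (n + 1) ∘ S = φ n`. Hence `(S - m) v = x` forces
`m ^ (n + 1) • φ n v = -∑_{k ≤ n} m ^ k • φ k x`. For `|m| < r₃(S)` the left-hand side is small
along a subsequence, so wherever the power series of `x` converges its sum at `m` is zero. If a
nonzero `l` in the disc were in the local resolvent set, this would happen on a nonempty open set,
and the identity theorem would kill every coefficient `φ n x`. At `l = 0` the same relation,
divided by `m ^ n` as `m → 0`, kills the coefficients one at a time.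
-/

section PowerSeries

variable {F : Type*} [NormedAddCommGroup F]

/-- The power series `∑ zⁿ • y n` with vector coefficients, as a formal multilinear series in the
scalar variable `z`. -/
def vectorPowerSeries (𝕜 : Type*) [NontriviallyNormedField 𝕜] [NormedSpace 𝕜 F] (y : ℕ → F) :
    FormalMultilinearSeries 𝕜 𝕜 F :=
  fun n => ContinuousMultilinearMap.mkPiRing 𝕜 (Fin n) (y n)

section NontriviallyNormedField

variable {𝕜 : Type*} [NontriviallyNormedField 𝕜] [NormedSpace 𝕜 F]

lemma vectorPowerSeries_apply (y : ℕ → F) (m : 𝕜) (n : ℕ) :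
    (vectorPowerSeries 𝕜 y n fun _ => m) = m ^ n • y n := by
  simp [vectorPowerSeries]

lemma vectorPowerSeries_sum (y : ℕ → F) (m : 𝕜) :
    (vectorPowerSeries 𝕜 y).sum m = ∑' n, m ^ n • y n := by
  simp only [FormalMultilinearSeries.sum, vectorPowerSeries_apply]

lemma vectorPowerSeries_eq_zero_iff {y : ℕ → F} : vectorPowerSeries 𝕜 y = 0 ↔ y = 0 := by
  simp only [funext_iff, vectorPowerSeries, FormalMultilinearSeries.ext_iff,
    FormalMultilinearSeries.zero_apply, ContinuousMultilinearMap.mkPiRing_eq_zero_iff,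
    Pi.zero_apply]

lemma vectorPowerSeries_radius (y : ℕ → F) :
    (vectorPowerSeries 𝕜 y).radius =
      (limsup (fun n : ℕ => ‖y n‖ₑ ^ (1 / n : ℝ)) atTop)⁻¹ := by
  rw [FormalMultilinearSeries.radius_eq_liminf, ENNReal.inv_limsup]
  refine congrArg (liminf · atTop) (funext fun n => ?_)
  have norm_coeff : ‖vectorPowerSeries 𝕜 y n‖₊ = ‖y n‖₊ :=
    NNReal.eq (ContinuousMultilinearMap.norm_mkPiRing (y n))
  rw [norm_coeff, one_div, ENNReal.coe_rpow_of_nonneg _ (by positivity), enorm_eq_nnnorm]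

lemma summable_pow_smul_of_enorm_lt [CompleteSpace F] {y : ℕ → F} {m : 𝕜}
    (hm : ‖m‖ₑ < (limsup (fun n : ℕ => ‖y n‖ₑ ^ (1 / n : ℝ)) atTop)⁻¹) :
    Summable fun n => m ^ n • y n := by
  rw [← vectorPowerSeries_radius (𝕜 := 𝕜)] at hm
  simpa only [vectorPowerSeries_apply] using
    (vectorPowerSeries 𝕜 y).summable (x := m) (by simpa using hm)

end NontriviallyNormedField

lemma eq_zero_of_eventually_tsum_pow_smul_eq_zero {𝕜 : Type*} [RCLike 𝕜] [NormedSpace 𝕜 F]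
    [CompleteSpace F] {y : ℕ → F} {z : 𝕜}
    (hz : ‖z‖ₑ < (limsup (fun n : ℕ => ‖y n‖ₑ ^ (1 / n : ℝ)) atTop)⁻¹)
    (hzero : ∀ᶠ m in 𝓝 z, ∑' n, m ^ n • y n = 0) :
    y = 0 := by
  set p := vectorPowerSeries 𝕜 y
  rw [← vectorPowerSeries_radius (𝕜 := 𝕜)] at hz
  have radius_pos : 0 < p.radius := hz.pos
  have hp := p.hasFPowerSeriesOnBall radius_pos
  have sum_eq_zero : Set.EqOn p.sum 0 (Metric.eball 0 p.radius) :=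
    hp.analyticOnNhd.eqOn_zero_of_preconnected_of_eventuallyEq_zero
      Metric.isPreconnected_eball (z₀ := z) (by simpa using hz)
      (hzero.mono fun m hm => (vectorPowerSeries_sum y m).trans hm)
  exact vectorPowerSeries_eq_zero_iff.1 <| hp.hasFPowerSeriesAt.eq_zero_of_eventually <|
    sum_eq_zero.eventuallyEq_of_mem (Metric.eball_mem_nhds 0 radius_pos)

end PowerSeries

section RootTest

lemma frequently_mul_pow_le_one {b : ℕ → ℝ≥0∞} {r : ℝ≥0∞}
    (hr : r < (liminf (fun n : ℕ => b n ^ (1 / n : ℝ)) atTop)⁻¹) :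
    ∃ᶠ n in atTop, b n * r ^ n ≤ 1 := by
  have root_lt := frequently_lt_of_liminf_lt (by isBoundedDefault) (ENNReal.lt_inv_iff_lt_inv.1 hr)
  refine (root_lt.and_eventually (eventually_gt_atTop 0)).mono ?_
  rintro n ⟨hn, n_pos⟩
  rw [one_div, ENNReal.rpow_inv_lt_iff (by positivity), ENNReal.rpow_natCast, ← ENNReal.inv_pow]
    at hn
  exact ENNReal.le_inv_iff_mul_le.1 hn.le

lemma liminf_mul_pow_eq_zero {b : ℕ → ℝ≥0∞} {t : ℝ≥0∞}
    (ht : t < (liminf (fun n : ℕ => b n ^ (1 / n : ℝ)) atTop)⁻¹) :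
    liminf (fun n => b n * t ^ n) atTop = 0 := by
  obtain ⟨r, htr, hr⟩ := exists_between ht
  have r_ne_zero : r ≠ 0 := htr.ne_bot
  have r_ne_top : r ≠ ∞ := hr.ne_top
  have frequently_le : ∃ᶠ n in atTop, b n * t ^ n ≤ (t / r) ^ n := by
    refine (frequently_mul_pow_le_one hr).mono fun n hn => ?_
    calc b n * t ^ n = b n * r ^ n * (t / r) ^ n := by
          rw [mul_assoc, ← mul_pow, ENNReal.mul_div_cancel r_ne_zero r_ne_top]
      _ ≤ (t / r) ^ n := mul_le_of_le_one_left' hn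
  have tendsto_ratio : Tendsto (fun n : ℕ => (t / r) ^ n) atTop (𝓝 0) :=
    ENNReal.tendsto_pow_atTop_nhds_zero_of_lt_one <|
      ENNReal.div_lt_of_lt_mul (by rwa [one_mul])
  refine nonpos_iff_eq_zero.1 (le_of_forall_gt_imp_ge_of_dense fun ε hε => ?_)
  have eventually_le : ∀ᶠ n in atTop, (t / r) ^ n ≤ ε := tendsto_ratio.eventually_le_const hε
  exact liminf_le_of_frequently_le'
    ((frequently_le.and_eventually eventually_le).mono fun n hn => hn.1.trans hn.2)

end RootTest

/-- The maps `φ n` are the coefficient functionals of a model of `T` as multiplication by the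
variable on `F`-valued power series. -/
structure IsShiftModel {𝕜 X F : Type*} [NontriviallyNormedField 𝕜] [NormedAddCommGroup X]
    [NormedSpace 𝕜 X] [NormedAddCommGroup F] [NormedSpace 𝕜 F] (T : X →L[𝕜] X)
    (φ : ℕ → X →L[𝕜] F) : Prop where
  coeff_zero : ∀ x, φ 0 (T x) = 0
  coeff_succ : ∀ n x, φ (n + 1) (T x) = φ n x

namespace IsShiftModel

section NontriviallyNormedField

variable {𝕜 X F : Type*} [NontriviallyNormedField 𝕜] [NormedAddCommGroup X] [NormedSpace 𝕜 X]
  [NormedAddCommGroup F] [NormedSpace 𝕜 F] {T : X →L[𝕜] X} {φ : ℕ → X →L[𝕜] F} {v x : X} {m : 𝕜}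

lemma pow_succ_smul_coeff_eq_neg_sum (hφ : IsShiftModel T φ) (hv : T v - m • v = x) (n : ℕ) :
    m ^ (n + 1) • φ n v = -∑ k ∈ Finset.range (n + 1), m ^ k • φ k x := by
  subst hv
  induction n with
  | zero => simp [hφ.coeff_zero]
  | succ n ih =>
    rw [Finset.sum_range_succ, neg_add, ← ih, map_sub, hφ.coeff_succ, map_smul, smul_sub, smul_smul,
      ← pow_succ]
    abel

lemma tsum_pow_smul_coeff_eq_zero [CompleteSpace F] (hφ : IsShiftModel T φ)
    (hv : T v - m • v = x)
    (hx : ‖m‖ₑ < (limsup (fun n : ℕ => ‖φ n x‖ₑ ^ (1 / n : ℝ)) atTop)⁻¹)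
    (hm : ‖m‖ₑ < (liminf (fun n : ℕ => ‖φ n‖ₑ ^ (1 / n : ℝ)) atTop)⁻¹) :
    ∑' n, m ^ n • φ n x = 0 := by
  set s : ℕ → F := fun n => ∑ k ∈ Finset.range (n + 1), m ^ k • φ k x
  have tendsto_s : Tendsto s atTop (𝓝 (∑' n, m ^ n • φ n x)) :=
    (summable_pow_smul_of_enorm_lt hx).hasSum.tendsto_sum_nat.comp (tendsto_add_atTop_nat 1)
  have enorm_s_le (n : ℕ) : ‖s n‖ₑ ≤ ‖m‖ₑ * ‖v‖ₑ * (‖φ n‖ₑ * ‖m‖ₑ ^ n) :=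
    calc ‖s n‖ₑ = ‖m ^ (n + 1) • φ n v‖ₑ := by rw [hφ.pow_succ_smul_coeff_eq_neg_sum hv, enorm_neg]
      _ ≤ ‖m‖ₑ ^ (n + 1) * (‖φ n‖ₑ * ‖v‖ₑ) := by
        rw [enorm_smul, enorm_pow]
        gcongr
        exact (φ n).le_opENorm v
      _ = ‖m‖ₑ * ‖v‖ₑ * (‖φ n‖ₑ * ‖m‖ₑ ^ n) := by ring
  have liminf_bound : liminf (fun n => ‖m‖ₑ * ‖v‖ₑ * (‖φ n‖ₑ * ‖m‖ₑ ^ n)) atTop = 0 := by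
    rw [ENNReal.liminf_const_mul_of_ne_top (ENNReal.mul_ne_top enorm_ne_top enorm_ne_top),
      liminf_mul_pow_eq_zero hm, mul_zero]
  have limit_le : ‖∑' n, m ^ n • φ n x‖ₑ ≤ 0 :=
    tendsto_s.enorm.liminf_eq ▸ (liminf_le_liminf (.of_forall enorm_s_le)).trans_eq liminf_bound
  simpa using limit_le

end NontriviallyNormedField

variable {X F : Type*} [NormedAddCommGroup X] [NormedSpace ℂ X] [NormedAddCommGroup F]
  [NormedSpace ℂ F] {T : X →L[ℂ] X} {φ : ℕ → X →L[ℂ] F} {x : X}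

lemma coeff_eq_zero_of_zero_mem_localResolventSet (hφ : IsShiftModel T φ)
    (h0 : 0 ∈ localResolventSet T x) (n : ℕ) : φ n x = 0 := by
  obtain ⟨U, hU, h0U, f, hf, hfx⟩ := h0
  induction n using Nat.strong_induction_on with
  | _ n ih =>
    have eq_neg_smul : ∀ᶠ m in 𝓝[≠] (0 : ℂ), -(m • φ n (f m)) = φ n x := by
      filter_upwards [mem_nhdsWithin_of_mem_nhds (hU.mem_nhds h0U), self_mem_nhdsWithin]
        with m hmU hm0
      have sum_eq : ∑ k ∈ Finset.range (n + 1), m ^ k • φ k x = m ^ n • φ n x := by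
        rw [Finset.sum_range_succ, Finset.sum_eq_zero, zero_add]
        intro k hk
        rw [ih k (Finset.mem_range.1 hk), smul_zero]
      have key := hφ.pow_succ_smul_coeff_eq_neg_sum (hfx m hmU) n
      rw [sum_eq, pow_succ, mul_smul, ← smul_neg] at key
      rw [smul_right_injective F (pow_ne_zero n hm0) key, neg_neg]
    have tendsto_zero : Tendsto (fun m => -(m • φ n (f m))) (𝓝[≠] (0 : ℂ)) (𝓝 0) := by
      have continuousAt : ContinuousAt (fun m : ℂ => -(m • φ n (f m))) 0 :=
        (continuousAt_id.smul ((φ n).continuous.continuousAt.comp (hf 0 h0U).continuousAt)).neg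
      simpa using continuousAt.tendsto.mono_left nhdsWithin_le_nhds
    exact tendsto_nhds_unique (tendsto_const_nhds.congr' (eq_neg_smul.mono fun _ => Eq.symm))
      tendsto_zero

lemma coeff_eq_zero_of_mem_localResolventSet [CompleteSpace F] (hφ : IsShiftModel T φ) {l : ℂ}
    (hl0 : l ≠ 0) (hl : l ∈ localResolventSet T x)
    (hlx : ‖l‖ₑ ≤ (limsup (fun n : ℕ => ‖φ n x‖ₑ ^ (1 / n : ℝ)) atTop)⁻¹)
    (hlφ : ‖l‖ₑ ≤ (liminf (fun n : ℕ => ‖φ n‖ₑ ^ (1 / n : ℝ)) atTop)⁻¹) (n : ℕ) :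
    φ n x = 0 := by
  obtain ⟨U, hU, hlU, f, -, hfx⟩ := hl
  have l_mem_closure : l ∈ closure (Metric.ball (0 : ℂ) ‖l‖) := by
    rw [closure_ball _ (norm_ne_zero_iff.2 hl0)]
    simp
  obtain ⟨z, hzU, hz⟩ := mem_closure_iff.1 l_mem_closure U hU hlU
  have enorm_lt {m : ℂ} (hm : m ∈ Metric.ball (0 : ℂ) ‖l‖) : ‖m‖ₑ < ‖l‖ₑ :=
    ENNReal.coe_lt_coe.2 (mem_ball_zero_iff.1 hm)
  suffices ∀ᶠ m in 𝓝 z, ∑' n, m ^ n • φ n x = 0 from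
    congrFun (eq_zero_of_eventually_tsum_pow_smul_eq_zero ((enorm_lt hz).trans_le hlx) this) n
  filter_upwards [hU.mem_nhds hzU, Metric.isOpen_ball.mem_nhds hz] with m hmU hm
  exact hφ.tsum_pow_smul_coeff_eq_zero (hfx m hmU) ((enorm_lt hm).trans_le hlx)
    ((enorm_lt hm).trans_le hlφ)

theorem mem_localSpectrum_of_enorm_le [CompleteSpace F] (hφ : IsShiftModel T φ)
    (hx : ∃ n, φ n x ≠ 0) {l : ℂ}
    (hlx : ‖l‖ₑ ≤ (limsup (fun n : ℕ => ‖φ n x‖ₑ ^ (1 / n : ℝ)) atTop)⁻¹)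
    (hlφ : ‖l‖ₑ ≤ (liminf (fun n : ℕ => ‖φ n‖ₑ ^ (1 / n : ℝ)) atTop)⁻¹) :
    l ∈ localSpectrum T x := by
  intro hl
  obtain ⟨n, hn⟩ := hx
  obtain rfl | hl0 := eq_or_ne l 0
  · exact hn (hφ.coeff_eq_zero_of_zero_mem_localResolventSet hl n)
  · exact hn (hφ.coeff_eq_zero_of_mem_localResolventSet hl0 hl hlx hlφ n)

end IsShiftModel

section WeightedShift

variable {E : ℕ → Type*} [∀ n, NormedAddCommGroup (E n)] [∀ n, NormedSpace ℂ (E n)]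

/-- The product `B_n = A_{n-1} ⋯ A_1 A_0` of the weights of an operator weighted shift between
possibly different coordinate spaces; `wB` is the case of a single Hilbert space. -/
def weightProduct (A : ∀ n, E n ≃L[ℂ] E (n + 1)) : ∀ n, E 0 ≃L[ℂ] E n
  | 0 => .refl ℂ (E 0)
  | n + 1 => (weightProduct A n).trans (A n)

/-- The map `x ↦ B_n⁻¹ x_n`, which reads off the `n`-th coefficient of `x` in the power series
model of the weighted shift with weights `A`. -/
def shiftCoeff (p : ℝ≥0∞) [Fact (1 ≤ p)] (A : ∀ n, E n ≃L[ℂ] E (n + 1)) (n : ℕ) :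
    lp E p →L[ℂ] E 0 :=
  ((weightProduct A n).symm : E n →L[ℂ] E 0) ∘L lp.evalCLM ℂ E p n

variable {p : ℝ≥0∞} [Fact (1 ≤ p)]

lemma shiftCoeff_apply (A : ∀ n, E n ≃L[ℂ] E (n + 1)) (n : ℕ) (x : lp E p) :
    shiftCoeff p A n x = (weightProduct A n).symm (x n) :=
  rfl

lemma isShiftModel_shiftCoeff {A : ∀ n, E n ≃L[ℂ] E (n + 1)} {S : lp E p →L[ℂ] lp E p}
    (hS0 : ∀ x, S x 0 = 0) (hS : ∀ x n, S x (n + 1) = A n (x n)) :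
    IsShiftModel S (shiftCoeff p A) where
  coeff_zero x := by rw [shiftCoeff_apply, hS0, map_zero]
  coeff_succ n x := by simp [shiftCoeff_apply, hS, weightProduct]

lemma exists_shiftCoeff_ne_zero (A : ∀ n, E n ≃L[ℂ] E (n + 1)) {x : lp E p} (hx : x ≠ 0) :
    ∃ n, shiftCoeff p A n x ≠ 0 := by
  contrapose! hx
  ext n
  simpa [shiftCoeff_apply] using hx n

lemma enorm_shiftCoeff_le (A : ∀ n, E n ≃L[ℂ] E (n + 1)) (n : ℕ) :
    ‖shiftCoeff p A n‖ₑ ≤ ‖((weightProduct A n).symm : E n →L[ℂ] E 0)‖ₑ := by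
  refine enorm_le_iff_norm_le.2 (ContinuousLinearMap.opNorm_le_bound _ (norm_nonneg _) fun x => ?_)
  exact ((weightProduct A n).symm : E n →L[ℂ] E 0).le_opNorm_of_le
    (lp.norm_apply_le_norm (zero_lt_one.trans_le Fact.out).ne' x n)

theorem stmt13_general [CompleteSpace (E 0)] (A : ∀ n, E n ≃L[ℂ] E (n + 1))
    (S : lp E p →L[ℂ] lp E p) (hS0 : ∀ x, S x 0 = 0) (hS : ∀ x n, S x (n + 1) = A n (x n))
    (x : lp E p) (hx : x ≠ 0) :
    {l : ℂ | ‖l‖ₑ ≤ min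
      (limsup (fun n : ℕ => ‖(weightProduct A n).symm (x n)‖ₑ ^ (1 / n : ℝ)) atTop)⁻¹
      (liminf (fun n : ℕ => ‖((weightProduct A n).symm : E n →L[ℂ] E 0)‖ₑ ^ (1 / n : ℝ))
        atTop)⁻¹} ⊆ localSpectrum S x := by
  intro l hl
  obtain ⟨hlx, hlA⟩ := le_min_iff.1 (Set.mem_ofPred.1 hl)
  refine (isShiftModel_shiftCoeff hS0 hS).mem_localSpectrum_of_enorm_le
    (exists_shiftCoeff_ne_zero A hx) hlx
    (hlA.trans (ENNReal.inv_le_inv.2 (liminf_le_liminf (.of_forall fun n => ?_))))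
  gcongr
  exact enorm_shiftCoeff_le A n

end WeightedShift

lemma weightProduct_ofUnit_symm {H : Type*} [NormedAddCommGroup H] [InnerProductSpace ℂ H]
    [CompleteSpace H] (A : ℕ → (H →L[ℂ] H)ˣ) (n : ℕ) :
    ((weightProduct (fun k => .ofUnit (A k)) n).symm : H →L[ℂ] H) = wBi A n := by
  induction n with
  | zero => rfl
  | succ n ih =>
    have wBi_succ : wBi A (n + 1) = wBi A n * ((A n)⁻¹ : (H →L[ℂ] H)ˣ) := by simp [wBi, wB]
    rw [wBi_succ, ← ih]
    rfl

theorem stmt13 {H : Type*} [NormedAddCommGroup H] [InnerProductSpace ℂ H] [CompleteSpace H]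
    (A : ℕ → (H →L[ℂ] H)ˣ)
    (hbdd : ∃ C : ℝ, ∀ n, ‖(A n : H →L[ℂ] H)‖ ≤ C)
    (S : lp (fun _ : ℕ => H) 2 →L[ℂ] lp (fun _ : ℕ => H) 2)
    (hS0 : ∀ x : lp (fun _ : ℕ => H) 2, S x 0 = 0)
    (hS : ∀ (x : lp (fun _ : ℕ => H) 2) (n : ℕ), S x (n + 1) = (A n : H →L[ℂ] H) (x n)) :
    ∀ x : lp (fun _ : ℕ => H) 2, x ≠ 0 →
      {l : ℂ | (‖l‖₊ : ℝ≥0∞) ≤ min (RA A x) (r3 A)} ⊆ localSpectrum S x := by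
  intro x hx
  simp only [RA, r3, ← weightProduct_ofUnit_symm]
  exact stmt13_general (fun n => .ofUnit (A n)) S hS0 hS x hx
end
end
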